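/- Fix integers n, k ≥ 1, and let A and B be connection forms on ℝⁿ. For t ∈ ℝ let Aᵗ = A + tB, with curvature Fᵗ. Then for every index b and every x ∈ ℝⁿ, the function t ↦ −Σ_a (∂_a Fᵗ_{ab} + Aᵗ_a Fᵗ_{ab} − Fᵗ_{ab} Aᵗ_a)(x) is differentiable at t = 0 with derivative (M^D B)_b(x), where (M^D B)_b = −Σ_a D_a(D_a B_b − D_b B_a) − Σ_a (F_{ba} B_a − B_a F_{ba}) and D_a S = ∂_a S + A_a S − S A_a on matrix-valued maps. (Equation (3.3): the derivative of the Yang–Mills current along a deformation is M^D applied to the infinitesimal deformation; hence for A Yang–Mills, an infinitesimal deformation B is through Yang–Mills connections to first order if and only if M^D B = 0.) -/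

import Mathlib

noncomputable section

/-- Points of `ℝⁿ`. -/
abbrev Vec (n : ℕ) := Fin n → ℝ

/-- Real `k × k` matrices, as plain functions. -/
abbrev Mat (k : ℕ) := Fin k → Fin k → ℝ

/-- Matrix product. -/
def matMul {k : ℕ} (M N : Mat k) : Mat k := fun i j => ∑ l, M i l * N l j

/-- Matrix acting on a vector. -/
def matVec {k : ℕ} (M : Mat k) (v : Fin k → ℝ) : Fin k → ℝ := fun i => ∑ j, M i j * v j

/-- The identity matrix. -/
def idMat (k : ℕ) : Mat k := fun i j => if i = j then 1 else 0

/-- Partial derivative `∂_a f` in the `a`-th coordinate direction. -/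
def pd {n : ℕ} {E : Type*} [NormedAddCommGroup E] [NormedSpace ℝ E]
    (a : Fin n) (f : Vec n → E) (x : Vec n) : E :=
  fderiv ℝ f x (Pi.single a 1)

/-- The coupled covariant derivative `D_a φ = ∂_a φ + A_a φ` on `ℝᵏ`-valued maps. -/
def Dv {n k : ℕ} (A : Fin n → Vec n → Mat k) (a : Fin n)
    (φ : Vec n → Fin k → ℝ) (x : Vec n) : Fin k → ℝ :=
  pd a φ x + matVec (A a x) (φ x)

/-- The covariant derivative `D_a S = ∂_a S + A_a S − S A_a` on matrix-valued maps. -/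
def Dm {n k : ℕ} (A : Fin n → Vec n → Mat k) (a : Fin n)
    (S : Vec n → Mat k) (x : Vec n) : Mat k :=
  pd a S x + matMul (A a x) (S x) - matMul (S x) (A a x)

/-- The curvature `F_{ab} = ∂_a A_b − ∂_b A_a + A_a A_b − A_b A_a` of a connection form. -/
def curv {n k : ℕ} (A : Fin n → Vec n → Mat k) (a b : Fin n) (x : Vec n) : Mat k :=
  pd a (A b) x - pd b (A a) x + matMul (A a x) (A b x) - matMul (A b x) (A a x)

/-- The middle operator `(M^D ψ)_b = −Σ_a D_a(D_a ψ_b − D_b ψ_a) − Σ_a F_{ba} ψ_a`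
of the Yang–Mills detour sequence, on `ℝᵏ`-valued 1-forms. -/
def MD {n k : ℕ} (A : Fin n → Vec n → Mat k) (ψ : Fin n → Vec n → Fin k → ℝ)
    (b : Fin n) (x : Vec n) : Fin k → ℝ :=
  -(∑ a, Dv A a (fun y => Dv A a (ψ b) y - Dv A b (ψ a) y) x)
    - ∑ a, matVec (curv A b a x) (ψ a x)

/-- The middle operator `M^D` on `End(V)`-valued (matrix-valued) 1-forms:
`(M^D B)_b = −Σ_a D_a(D_a B_b − D_b B_a) − Σ_a (F_{ba} B_a − B_a F_{ba})`. -/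
def MDm {n k : ℕ} (A : Fin n → Vec n → Mat k) (B : Fin n → Vec n → Mat k)
    (b : Fin n) (x : Vec n) : Mat k :=
  -(∑ a, Dm A a (fun y => Dm A a (B b) y - Dm A b (B a) y) x)
    - ∑ a, (matMul (curv A b a x) (B a x) - matMul (B a x) (curv A b a x))

/-! Both the covariant derivative and the curvature depend on the connection only through partial
derivatives and the commutator, which is bilinear. Hence the curvature of `A + t B` is
`F_{ab} + t (D_a B_b - D_b B_a) + t² [B_a, B_b]`, its covariant divergence is a cubic polynomial in
`t`, and the linear coefficient is `∑ₐ (D_a(D_a B_b - D_b B_a) + [B_a, F_{ab}])`. The antisymmetry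
of `F` and of the commutator turns `[B_a, F_{ab}]` into `[F_{ba}, B_a]`. -/

section Commutator

variable {k : ℕ}

/-- The commutator `[M, N] = M N - N M` of real `k × k` matrices, bundled as a continuous bilinear
map so that its linearity and smoothness come from the general theory. The product is taken in
`Matrix`, since the ring structure of the function type `Mat k` is entrywise. -/
def matComm (k : ℕ) : Mat k →L[ℝ] Mat k →L[ℝ] Mat k :=
  LinearMap.toContinuousBilinearMap (E := Mat k) (F := Mat k) (G := Mat k)
    (LinearMap.mul ℝ (Matrix (Fin k) (Fin k) ℝ) - (LinearMap.mul ℝ _).flip)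

theorem matComm_apply (M N : Mat k) : matComm k M N = matMul M N - matMul N M := rfl

theorem matComm_swap (M N : Mat k) : matComm k N M = -matComm k M N := by
  simp only [matComm_apply, neg_sub]

end Commutator

section PartialDerivative

variable {n : ℕ} {E : Type*} [NormedAddCommGroup E] [NormedSpace ℝ E]
  {f g : Vec n → E} {x : Vec n}

theorem pd_add (a : Fin n) (hf : DifferentiableAt ℝ f x) (hg : DifferentiableAt ℝ g x) :
    pd a (fun y => f y + g y) x = pd a f x + pd a g x := by
  simp only [pd, fderiv_fun_add hf hg, add_apply]

theorem pd_const_smul (a : Fin n) (t : ℝ) (hf : DifferentiableAt ℝ f x) :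
    pd a (fun y => t • f y) x = t • pd a f x := by
  simp only [pd, fderiv_fun_const_smul hf, smul_apply]

theorem pd_add_smul (a : Fin n) (t : ℝ) (hf : DifferentiableAt ℝ f x)
    (hg : DifferentiableAt ℝ g x) :
    pd a (fun y => f y + t • g y) x = pd a f x + t • pd a g x := by
  rw [pd_add a hf (hg.fun_const_smul t), pd_const_smul a t hg]

theorem differentiableAt_pd (a : Fin n) (hf : ContDiffAt ℝ 2 f x) :
    DifferentiableAt ℝ (pd a f) x :=
  ((hf.fderiv_right (m := 1) (by norm_num)).differentiableAt one_ne_zero).clm_apply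
    (differentiableAt_const _)

end PartialDerivative

section CovariantDerivative

variable {n k : ℕ} {A B : Fin n → Vec n → Mat k} {S T : Vec n → Mat k} {x : Vec n}

theorem Dm_eq_pd_add_matComm (A : Fin n → Vec n → Mat k) (a : Fin n) (S : Vec n → Mat k)
    (x : Vec n) : Dm A a S x = pd a S x + matComm k (A a x) (S x) := by
  rw [Dm, matComm_apply, add_sub_assoc]

theorem Dm_congr (A : Fin n → Vec n → Mat k) (a : Fin n) (h : S =ᶠ[nhds x] T) :
    Dm A a S x = Dm A a T x := by
  rw [Dm, Dm, pd, pd, h.fderiv_eq, h.eq_of_nhds]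

theorem Dm_add_smul (A : Fin n → Vec n → Mat k) (a : Fin n) (t : ℝ)
    (hS : DifferentiableAt ℝ S x) (hT : DifferentiableAt ℝ T x) :
    Dm A a (fun y => S y + t • T y) x = Dm A a S x + t • Dm A a T x := by
  simp only [Dm_eq_pd_add_matComm, pd_add_smul a t hS hT, map_add, map_smul]
  module

theorem Dm_connection_add_smul (A B : Fin n → Vec n → Mat k) (t : ℝ) (a : Fin n)
    (S : Vec n → Mat k) (x : Vec n) :
    Dm (fun c y => A c y + t • B c y) a S x = Dm A a S x + t • matComm k (B a x) (S x) := by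
  simp only [Dm_eq_pd_add_matComm, map_add, map_smul, add_apply,
    smul_apply, add_assoc]

theorem differentiableAt_Dm {a : Fin n} (hA : DifferentiableAt ℝ (A a) x)
    (hS : ContDiffAt ℝ 2 S x) : DifferentiableAt ℝ (Dm A a S) x := by
  have hpd := differentiableAt_pd a hS
  have hS' := hS.differentiableAt two_ne_zero
  rw [funext (Dm_eq_pd_add_matComm A a S)]
  fun_prop

/-- The covariant exterior derivative `(d^D B)_{ab} = D_a B_b - D_b B_a` of a matrix-valued
1-form, which is the first variation of the curvature. -/
def covExtDeriv (A B : Fin n → Vec n → Mat k) (a b : Fin n) (x : Vec n) : Mat k :=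
  Dm A a (B b) x - Dm A b (B a) x

theorem differentiableAt_covExtDeriv {a b : Fin n} (hAa : DifferentiableAt ℝ (A a) x)
    (hAb : DifferentiableAt ℝ (A b) x) (hBa : ContDiffAt ℝ 2 (B a) x)
    (hBb : ContDiffAt ℝ 2 (B b) x) : DifferentiableAt ℝ (covExtDeriv A B a b) x :=
  (differentiableAt_Dm hAa hBb).sub (differentiableAt_Dm hAb hBa)

end CovariantDerivative

section Curvature

variable {n k : ℕ} {A B : Fin n → Vec n → Mat k} {x : Vec n} {a b : Fin n}

theorem curv_eq_pd_sub_pd_add_matComm (A : Fin n → Vec n → Mat k) (a b : Fin n) (x : Vec n) :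
    curv A a b x = pd a (A b) x - pd b (A a) x + matComm k (A a x) (A b x) := by
  rw [curv, matComm_apply, add_sub_assoc]

theorem curv_swap (A : Fin n → Vec n → Mat k) (a b : Fin n) (x : Vec n) :
    curv A b a x = -curv A a b x := by
  rw [curv, curv]
  abel

theorem differentiableAt_curv (hAa : ContDiffAt ℝ 2 (A a) x) (hAb : ContDiffAt ℝ 2 (A b) x) :
    DifferentiableAt ℝ (curv A a b) x := by
  have hpda := differentiableAt_pd a hAb
  have hpdb := differentiableAt_pd b hAa
  have hAa' := hAa.differentiableAt two_ne_zero
  have hAb' := hAb.differentiableAt two_ne_zero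
  rw [funext (curv_eq_pd_sub_pd_add_matComm A a b)]
  fun_prop

theorem curv_add_smul (t : ℝ) (hAa : DifferentiableAt ℝ (A a) x)
    (hAb : DifferentiableAt ℝ (A b) x) (hBa : DifferentiableAt ℝ (B a) x)
    (hBb : DifferentiableAt ℝ (B b) x) :
    curv (fun c y => A c y + t • B c y) a b x =
      curv A a b x + t • covExtDeriv A B a b x + t ^ 2 • matComm k (B a x) (B b x) := by
  simp only [curv_eq_pd_sub_pd_add_matComm, covExtDeriv, Dm_eq_pd_add_matComm,
    pd_add_smul _ t hAa hBa, pd_add_smul _ t hAb hBb, map_add, map_smul,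
    add_apply, smul_apply, matComm_swap (B a x) (A b x)]
  module

end Curvature

section FirstVariation

variable {n k : ℕ} {A B : Fin n → Vec n → Mat k} {x : Vec n} {a b : Fin n}

theorem Dm_curv_add_smul (t : ℝ) (hAa : ContDiffAt ℝ 2 (A a) x) (hAb : ContDiffAt ℝ 2 (A b) x)
    (hBa : ContDiffAt ℝ 2 (B a) x) (hBb : ContDiffAt ℝ 2 (B b) x) :
    Dm (fun c y => A c y + t • B c y) a (curv (fun c y => A c y + t • B c y) a b) x =
      Dm A a (curv A a b) x +
        t • (Dm A a (covExtDeriv A B a b) x + matComm k (B a x) (curv A a b x)) +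
        t ^ 2 • (Dm A a (fun y => matComm k (B a y) (B b y)) x +
          matComm k (B a x) (covExtDeriv A B a b x)) +
        t ^ 3 • matComm k (B a x) (matComm k (B a x) (B b x)) := by
  have differentiableAt_of {f : Vec n → Mat k} {y : Vec n} (hf : ContDiffAt ℝ 2 f y) :
      DifferentiableAt ℝ f y := hf.differentiableAt two_ne_zero
  have curv_expansion : curv (fun c y => A c y + t • B c y) a b =ᶠ[nhds x] fun y =>
      curv A a b y + t • covExtDeriv A B a b y + t ^ 2 • matComm k (B a y) (B b y) := by
    filter_upwards [hAa.eventually (by simp), hAb.eventually (by simp),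
      hBa.eventually (by simp), hBb.eventually (by simp)] with y hAa hAb hBa hBb
    exact curv_add_smul t (differentiableAt_of hAa) (differentiableAt_of hAb)
      (differentiableAt_of hBa) (differentiableAt_of hBb)
  have hF := differentiableAt_curv hAa hAb
  have hdB := differentiableAt_covExtDeriv (differentiableAt_of hAa) (differentiableAt_of hAb)
    hBa hBb
  have hBB : DifferentiableAt ℝ (fun y => matComm k (B a y) (B b y)) x := by
    have hBa' := differentiableAt_of hBa
    have hBb' := differentiableAt_of hBb
    fun_prop
  rw [Dm_connection_add_smul, Dm_congr A a curv_expansion, curv_expansion.eq_of_nhds,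
    Dm_add_smul A a (t ^ 2) (hF.fun_add (hdB.fun_const_smul t)) hBB, Dm_add_smul A a t hF hdB]
  simp only [map_add, map_smul]
  module

theorem hasDerivAt_cubic_zero {E : Type*} [NormedAddCommGroup E] [NormedSpace ℝ E]
    (c₀ c₁ c₂ c₃ : E) :
    HasDerivAt (fun t : ℝ => c₀ + t • c₁ + t ^ 2 • c₂ + t ^ 3 • c₃) c₁ 0 := by
  have hderiv := ((((hasDerivAt_id (0 : ℝ)).smul_const c₁).const_add c₀).add
    ((hasDerivAt_pow 2 (0 : ℝ)).smul_const c₂)).add ((hasDerivAt_pow 3 (0 : ℝ)).smul_const c₃)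
  exact hderiv.congr_deriv (by simp)

theorem hasDerivAt_Dm_curv_add_smul (hAa : ContDiffAt ℝ 2 (A a) x)
    (hAb : ContDiffAt ℝ 2 (A b) x) (hBa : ContDiffAt ℝ 2 (B a) x)
    (hBb : ContDiffAt ℝ 2 (B b) x) :
    HasDerivAt
      (fun t : ℝ =>
        Dm (fun c y => A c y + t • B c y) a (curv (fun c y => A c y + t • B c y) a b) x)
      (Dm A a (covExtDeriv A B a b) x + matComm k (curv A b a x) (B a x)) 0 := by
  have bracket_eq : matComm k (curv A b a x) (B a x) = matComm k (B a x) (curv A a b x) := by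
    rw [matComm_swap, curv_swap, map_neg, neg_neg]
  simp only [Dm_curv_add_smul _ hAa hAb hBa hBb, bracket_eq]
  exact hasDerivAt_cubic_zero _ _ _ _

theorem MDm_eq_neg_sum (A B : Fin n → Vec n → Mat k) (b : Fin n) (x : Vec n) :
    MDm A B b x =
      -∑ a, (Dm A a (covExtDeriv A B a b) x + matComm k (curv A b a x) (B a x)) := by
  rw [Finset.sum_add_distrib, neg_add']
  rfl

theorem yangMillsCurrent_variation_general (hA : ∀ a, ContDiffAt ℝ 2 (A a) x)
    (hB : ∀ a, ContDiffAt ℝ 2 (B a) x) (b : Fin n) :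
    HasDerivAt
      (fun t : ℝ =>
        -(∑ a, Dm (fun c y => A c y + t • B c y) a
            (curv (fun c y => A c y + t • B c y) a b) x))
      (MDm A B b x) 0 := by
  rw [MDm_eq_neg_sum]
  exact (HasDerivAt.fun_sum fun a _ =>
    hasDerivAt_Dm_curv_add_smul (hA a) (hA b) (hB a) (hB b)).fun_neg

end FirstVariation

/-- Equation (3.3): the derivative at `t = 0` of the Yang–Mills current
`−δ^{Dᵗ} Fᵗ` of the deformed connection `Aᵗ = A + tB` is `(M^D B)_b`. -/
theorem yangMillsCurrent_variation (n k : ℕ) (hn : 1 ≤ n) (hk : 1 ≤ k)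
    (A B : Fin n → Vec n → Mat k)
    (hA : ∀ a, ContDiff ℝ (⊤ : ℕ∞) (A a)) (hB : ∀ a, ContDiff ℝ (⊤ : ℕ∞) (B a))
    (b : Fin n) (x : Vec n) :
    HasDerivAt
      (fun t : ℝ =>
        -(∑ a, Dm (fun c y => A c y + t • B c y) a
            (curv (fun c y => A c y + t • B c y) a b) x))
      (MDm A B b x) 0 :=
  yangMillsCurrent_variation_general (fun a => (contDiff_infty.1 (hA a) 2).contDiffAt)
    (fun a => (contDiff_infty.1 (hB a) 2).contDiffAt) b
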